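/- Let k₁, k₂, k₃ be nonnegative integers with k = k₁ + k₂ + k₃ ≤ 6. For every p ≥ 1 (including p = ∞) there exists a constant C > 0 such that for all t > 0: (i) ‖ ∂_x^{k₁} ∂_y^{k₂} ∂_z^{k₃} G(t, · − x', ·, · − z'; y') ‖_{L^p(ℝ³)} ≤ C e^{−ε t} t^{−(3/4)(1 − 1/p) − k/4} (1 + (A t)⁴)^{−(1/4)(1 − 1/p) − k₁/4}, uniformly in (x', y', z'), where the L^p norm is taken in the unprimed variables (x, y, z); and (ii) ‖ ∂_x^{k₁} ∂_y^{k₂} ∂_z^{k₃} G(t, x − ·, y, z − ·; ·) ‖_{L^p(ℝ³)} ≤ C e^{−ε t} t^{−(3/4)(1 − 1/p) − k/4} (1 + (A t)⁴)^{−(1/4)(1 − 1/p) − k₁/4}, uniformly in (x, y, z), where the L^p norm is taken in the primed variables (x', y', z'); in both cases the derivatives are taken with respect to the unprimed variables (x, y, z). -/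

import Mathlib

/-!
The proof is a rescaling to a family of oscillatory integrals with bounded parameters, followed by
integration by parts.

Write `T = t^{1/4}`, `σ = (1 + (A t)⁴)^{-1/4}`, `θ = A t σ` and `τ = T² = √t`, so that
`σ⁴ + θ⁴ = 1`. In the frequencies `T ξ / σ`, `T (η + A ξ t / 2)`, `T ζ`, centred at the middle of the
time interval, the spectral Green's function is `e^{-κt + R}` (`Ghat2_eq`), where `R` is a polynomial
in the new frequencies and in `σ`, `θ`, `τ`; here `σ` and `θ` are bounded, and `τ` multiplies only the
quadratic part `W₁`. The quartic part of `R` is `-4 W₂`, where `W₁` and `W₂` are the means over the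
time interval of the rescaled symbol and of its square. Since `W₁² ≤ W₂`,
`R ≤ (1/16 + δ) τ² - c (ξ⁴ + η⁴ + ζ⁴)` for every `δ > 0`, with `c > 0` depending only on `δ`
(`Rp_le`). As `τ² = t`, this is where the threshold `κ > 1/16 + ε` comes from.

Physical derivatives multiply the weight `e^R` by polynomials, each `∂_x` also producing a factor
`σ / T` and each `∂_y`, `∂_z` a factor `1 / T` (`pD_oscP`). Frequency derivatives of such weights are
again polynomials times `e^R`, so integrating by parts with `1 - ∂ᵢ²` in the three directions bounds
the integral pointwise by the profile `∏ (1 + Xᵢ²)⁻¹` (`osc_le`), uniformly in `t`. The rescaled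
position `X` is an affine function of the unprimed variables with the primed ones fixed, and also of
the primed variables with the unprimed ones fixed; in both cases the determinant is `± σ / T³`. The
`L^p` bounds are then the change of variables formula for the profile, which lies in every `L^p`, and
the powers of `t` and `1 + (A t)⁴` are collected in `scaling_identity`.
-/

open MeasureTheory
open scoped ENNReal

/-- The symbol `v(s; ξ, η, ζ) = ξ² + (η + A ξ s)² + ζ²`. -/
noncomputable def vA (A ξ η ζ s : ℝ) : ℝ := ξ ^ 2 + (η + A * ξ * s) ^ 2 + ζ ^ 2

/-- The spectral Green's function `Ĝ₂`. -/
noncomputable def Ghat2 (A κ t ξ η ζ : ℝ) : ℝ :=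
  Real.exp (∫ s in (0:ℝ)..t, (vA A ξ η ζ s - κ - 4 * vA A ξ η ζ s ^ 2))

/-- The Green's function `G(t, x - x', y, z - z'; y')` of the linearized equation. -/
noncomputable def GreenG (A κ t x y z x' y' z' : ℝ) : ℂ :=
  ∫ q : ℝ × ℝ × ℝ,
    Complex.exp (Complex.I * ((x * q.1 + y * q.2.1 + z * q.2.2 : ℝ) : ℂ)) *
      Complex.exp (-Complex.I *
        ((x' * q.1 + y' * (q.2.1 + A * q.1 * t) + z' * q.2.2 : ℝ) : ℂ)) *
      (Ghat2 A κ t q.1 q.2.1 q.2.2 : ℂ)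

/-- Partial derivative in the first coordinate of `ℝ³ = ℝ × ℝ × ℝ`. -/
noncomputable def pdx {E : Type*} [NormedAddCommGroup E] [NormedSpace ℝ E]
    (f : ℝ × ℝ × ℝ → E) : ℝ × ℝ × ℝ → E :=
  fun p => deriv (fun u => f (u, p.2.1, p.2.2)) p.1

/-- Partial derivative in the second coordinate. -/
noncomputable def pdy {E : Type*} [NormedAddCommGroup E] [NormedSpace ℝ E]
    (f : ℝ × ℝ × ℝ → E) : ℝ × ℝ × ℝ → E :=
  fun p => deriv (fun u => f (p.1, u, p.2.2)) p.2.1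

/-- Partial derivative in the third coordinate. -/
noncomputable def pdz {E : Type*} [NormedAddCommGroup E] [NormedSpace ℝ E]
    (f : ℝ × ℝ × ℝ → E) : ℝ × ℝ × ℝ → E :=
  fun p => deriv (fun u => f (p.1, p.2.1, u)) p.2.2

/-- The mixed partial derivative `∂_x^{k₁} ∂_y^{k₂} ∂_z^{k₃}`. -/
noncomputable def pD {E : Type*} [NormedAddCommGroup E] [NormedSpace ℝ E]
    (k₁ k₂ k₃ : ℕ) (f : ℝ × ℝ × ℝ → E) : ℝ × ℝ × ℝ → E :=
  pdx^[k₁] (pdy^[k₂] (pdz^[k₃] f))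

open MvPolynomial

/-! ### Lebesgue measure on `ℝ × ℝ × ℝ` under affine maps -/

lemma isAddHaar_vol : (volume : Measure (ℝ × ℝ × ℝ)).IsAddHaarMeasure := by
  have h2 : (volume : Measure (ℝ × ℝ)).IsAddHaarMeasure :=
    inferInstanceAs ((volume : Measure ℝ).prod (volume : Measure ℝ)).IsAddHaarMeasure
  exact inferInstanceAs ((volume : Measure ℝ).prod (volume : Measure (ℝ × ℝ))).IsAddHaarMeasure

/-- The coordinate isomorphism, used to transport `3 × 3` determinants to `ℝ × ℝ × ℝ`. -/
def coordEquiv : (ℝ × ℝ × ℝ) ≃ₗ[ℝ] (Fin 3 → ℝ) where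
  toFun p := ![p.1, p.2.1, p.2.2]
  invFun f := (f 0, f 1, f 2)
  map_add' p q := by ext i; fin_cases i <;> simp
  map_smul' c p := by ext i; fin_cases i <;> simp
  left_inv p := by simp
  right_inv f := by ext i; fin_cases i <;> simp

lemma map_affine_vol (M : Matrix (Fin 3) (Fin 3) ℝ) (hM : M.det ≠ 0) (m : ℝ × ℝ × ℝ) :
    Measure.map (fun p : ℝ × ℝ × ℝ =>
      (M 0 0 * p.1 + M 0 1 * p.2.1 + M 0 2 * p.2.2 + m.1,
       M 1 0 * p.1 + M 1 1 * p.2.1 + M 1 2 * p.2.2 + m.2.1,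
       M 2 0 * p.1 + M 2 1 * p.2.1 + M 2 2 * p.2.2 + m.2.2)) volume
      = ENNReal.ofReal |M.det⁻¹| • (volume : Measure (ℝ × ℝ × ℝ)) := by
  have := isAddHaar_vol
  let f : (ℝ × ℝ × ℝ) →ₗ[ℝ] (ℝ × ℝ × ℝ) :=
    coordEquiv.symm.toLinearMap ∘ₗ Matrix.toLin' M ∘ₗ coordEquiv.toLinearMap
  have hdet : LinearMap.det f = M.det := by
    have := LinearMap.det_conj (Matrix.toLin' M) coordEquiv.symm
    rw [LinearMap.det_toLin'] at this
    simpa [f] using this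
  have hf : Measure.map f volume = ENNReal.ofReal |M.det⁻¹| • (volume : Measure (ℝ × ℝ × ℝ)) := by
    rw [← hdet]
    exact Measure.map_linearMap_addHaar_eq_smul_addHaar _ (by rwa [hdet])
  have hfc : Measurable f := (LinearMap.continuous_of_finiteDimensional f).measurable
  have hcomp : (fun p : ℝ × ℝ × ℝ =>
      (M 0 0 * p.1 + M 0 1 * p.2.1 + M 0 2 * p.2.2 + m.1,
       M 1 0 * p.1 + M 1 1 * p.2.1 + M 1 2 * p.2.2 + m.2.1,
       M 2 0 * p.1 + M 2 1 * p.2.1 + M 2 2 * p.2.2 + m.2.2)) = (fun q => q + m) ∘ f := by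
    funext p
    simp [f, coordEquiv, Matrix.mulVec, dotProduct, Fin.sum_univ_three, Prod.ext_iff]
  rw [hcomp, ← Measure.map_map (measurable_add_const m) hfc, hf, Measure.map_smul,
    map_add_right_eq_self]

/-! ### The rescaled weight -/

/-- The evaluation point `(ξ, η, ζ, θ, σ, τ)`: the three rescaled frequencies are the variables
`0, 1, 2`, and the three parameters the variables `3, 4, 5`. -/
def env (σ θ τ : ℝ) (q : ℝ × ℝ × ℝ) : Fin 6 → ℝ := ![q.1, q.2.1, q.2.2, θ, σ, τ]

/-- The exponent of the rescaled spectral Green's function (without `-κ t`), a polynomial in the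
frequencies and the parameters. -/
noncomputable def Rp : MvPolynomial (Fin 6) ℝ :=
  X 5 * (X 4 ^ 2 * X 0 ^ 2 + X 1 ^ 2 + X 2 ^ 2 + C (1/12) * X 3 ^ 2 * X 0 ^ 2)
  - 4 * ((X 4 ^ 2 * X 0 ^ 2 + X 1 ^ 2 + X 2 ^ 2) ^ 2
      + C (1/3) * X 1 ^ 2 * X 3 ^ 2 * X 0 ^ 2 + C (1/80) * X 3 ^ 4 * X 0 ^ 4
      + C (1/6) * (X 4 ^ 2 * X 0 ^ 2 + X 1 ^ 2 + X 2 ^ 2) * X 3 ^ 2 * X 0 ^ 2)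

lemma eval_Rp (σ θ τ : ℝ) (q : ℝ × ℝ × ℝ) : eval (env σ θ τ q) Rp =
    τ * (σ ^ 2 * q.1 ^ 2 + q.2.1 ^ 2 + q.2.2 ^ 2 + 1 / 12 * θ ^ 2 * q.1 ^ 2)
    - 4 * ((σ ^ 2 * q.1 ^ 2 + q.2.1 ^ 2 + q.2.2 ^ 2) ^ 2
      + 1 / 3 * q.2.1 ^ 2 * θ ^ 2 * q.1 ^ 2 + 1 / 80 * θ ^ 4 * q.1 ^ 4
      + 1 / 6 * (σ ^ 2 * q.1 ^ 2 + q.2.1 ^ 2 + q.2.2 ^ 2) * θ ^ 2 * q.1 ^ 2) := by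
  simp [Rp, env]

/-- Coercivity. With `W₁`, `W₂` the means of the rescaled symbol and of its square,
`W₁² ≤ W₂`, so that all of `-4 W₂` but a small fraction absorbs `τ W₁` at the cost of
`(1/16 + δ) τ²`; the remaining fraction dominates the quartic. -/
lemma Rp_le {δ : ℝ} (hδ : 0 < δ) : ∃ c : ℝ, 0 < c ∧ ∀ σ θ τ : ℝ, σ ^ 4 + θ ^ 4 = 1 →
    ∀ q : ℝ × ℝ × ℝ, eval (env σ θ τ q) Rp ≤
      (1 / 16 + δ) * τ ^ 2 - c * (q.1 ^ 4 + q.2.1 ^ 4 + q.2.2 ^ 4) := by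
  -- `m` is the fraction used for absorption: `1 / (16 m) = 1/16 + δ`.
  set m : ℝ := 1 / (1 + 16 * δ) with hm
  have hm0 : 0 < m := by positivity
  have hm1 : m < 1 := by rw [hm, div_lt_one (by positivity)]; linarith
  have hmδ : (1 / 16 + δ) = 1 / (16 * m) := by rw [hm]; field_simp
  refine ⟨4 * (1 - m) / 80, by linarith, ?_⟩
  rintro σ θ τ hσθ ⟨ξ, η, ζ⟩
  rw [eval_Rp, hmδ]
  simp only
  set α := σ ^ 2 * ξ ^ 2 + η ^ 2 + ζ ^ 2 with hα
  set W1 := α + 1 / 12 * θ ^ 2 * ξ ^ 2 with hW1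
  set W2 := α ^ 2 + 1 / 3 * η ^ 2 * θ ^ 2 * ξ ^ 2 + 1 / 80 * θ ^ 4 * ξ ^ 4
      + 1 / 6 * α * θ ^ 2 * ξ ^ 2 with hW2
  have h12 : W1 ^ 2 ≤ W2 := by
    have : W2 - W1 ^ 2 = 1 / 3 * (η * θ * ξ) ^ 2 + (1 / 80 - 1 / 144) * (θ * ξ) ^ 4 := by
      rw [hW2, hW1]; ring
    have h : 0 ≤ W2 - W1 ^ 2 := by rw [this]; positivity
    linarith
  have hlow : (ξ ^ 4 + η ^ 4 + ζ ^ 4) / 80 ≤ W2 := by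
    have e : W2 - (ξ ^ 4 + η ^ 4 + ζ ^ 4) / 80 = (σ ^ 4 + θ ^ 4 - 1) * ξ ^ 4 / 80
      + 79 / 80 * (σ ^ 4 * ξ ^ 4 + η ^ 4 + ζ ^ 4)
      + 2 * (σ ^ 2 * ξ ^ 2 * η ^ 2 + σ ^ 2 * ξ ^ 2 * ζ ^ 2 + η ^ 2 * ζ ^ 2)
      + 1 / 3 * η ^ 2 * θ ^ 2 * ξ ^ 2
      + 1 / 6 * (σ ^ 2 * ξ ^ 2 + η ^ 2 + ζ ^ 2) * θ ^ 2 * ξ ^ 2 := by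
      rw [hW2, hα]; ring
    have h : 0 ≤ W2 - (ξ ^ 4 + η ^ 4 + ζ ^ 4) / 80 := by
      rw [e, hσθ]; simp only [sub_self, zero_mul, zero_div, zero_add]; positivity
    linarith
  have habs : τ * W1 ≤ 1 / (16 * m) * τ ^ 2 + 4 * m * W1 ^ 2 := by
    have : 1 / (16 * m) * τ ^ 2 + 4 * m * W1 ^ 2 - τ * W1 = (τ - 8 * m * W1) ^ 2 / (16 * m) := by
      field_simp; ring
    have h : 0 ≤ 1 / (16 * m) * τ ^ 2 + 4 * m * W1 ^ 2 - τ * W1 := by rw [this]; positivity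
    linarith
  have e1 : 4 * m * W1 ^ 2 ≤ 4 * m * W2 := by gcongr
  have e2 : 4 * (1 - m) * ((ξ ^ 4 + η ^ 4 + ζ ^ 4) / 80) ≤ 4 * (1 - m) * W2 :=
    mul_le_mul_of_nonneg_left hlow (by linarith)
  linarith

/-- A polynomial grows more slowly than `exp (β (τ² + ξ⁴ + η⁴ + ζ⁴))`, uniformly in the bounded
parameters `σ` and `θ`. -/
lemma poly_le (Q : MvPolynomial (Fin 6) ℝ) : ∀ β : ℝ, 0 < β → ∃ K : ℝ, 0 ≤ K ∧
    ∀ σ θ τ : ℝ, σ ^ 4 + θ ^ 4 = 1 → ∀ q : ℝ × ℝ × ℝ,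
      |eval (env σ θ τ q) Q| ≤ K * Real.exp (β * (τ ^ 2 + (q.1 ^ 4 + q.2.1 ^ 4 + q.2.2 ^ 4))) := by
  induction Q using MvPolynomial.induction_on with
  | C a =>
    intro β hβ
    refine ⟨|a|, abs_nonneg a, fun σ θ τ _ q => ?_⟩
    rw [eval_C]
    exact le_mul_of_one_le_right (abs_nonneg a) (Real.one_le_exp (by positivity))
  | add P Q hP hQ =>
    intro β hβ
    obtain ⟨K, hK, h⟩ := hP β hβ
    obtain ⟨K', hK', h'⟩ := hQ β hβ
    refine ⟨K + K', by positivity, fun σ θ τ hs q => ?_⟩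
    rw [map_add, add_mul]
    exact (abs_add_le _ _).trans (add_le_add (h σ θ τ hs q) (h' σ θ τ hs q))
  | mul_X P j hP =>
    intro β hβ
    obtain ⟨K, hK, h⟩ := hP (β / 2) (by positivity)
    refine ⟨K * (2 + 2 / β), by positivity, fun σ θ τ hs q => ?_⟩
    set S := τ ^ 2 + (q.1 ^ 4 + q.2.1 ^ 4 + q.2.2 ^ 4) with hS
    have hS0 : 0 ≤ S := by positivity
    have hp4 : ∀ x : ℝ, |x| ≤ 1 + x ^ 4 := fun x => by
      have : |x| ^ 4 = x ^ 4 := by rw [← abs_pow, abs_of_nonneg (by positivity)]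
      nlinarith [sq_nonneg (|x| - 1), sq_nonneg (|x| ^ 2 - 1), abs_nonneg x]
    have hp2 : ∀ x : ℝ, |x| ≤ 1 + x ^ 2 := fun x => by
      nlinarith [sq_nonneg (|x| - 1), sq_abs x, abs_nonneg x]
    have hσ : |σ| ≤ 2 + S := by
      have := hp4 σ
      have : 0 ≤ θ ^ 4 := by positivity
      linarith
    have hθ : |θ| ≤ 2 + S := by
      have := hp4 θ
      have : 0 ≤ σ ^ 4 := by positivity
      linarith
    have hX : |env σ θ τ q j| ≤ 2 + S := by
      have a0 : 0 ≤ τ ^ 2 := by positivity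
      have a1 : 0 ≤ q.1 ^ 4 := by positivity
      have a2 : 0 ≤ q.2.1 ^ 4 := by positivity
      have a3 : 0 ≤ q.2.2 ^ 4 := by positivity
      have b1 := hp4 q.1
      have b2 := hp4 q.2.1
      have b3 := hp4 q.2.2
      have b4 := hp2 τ
      fin_cases j <;> simp [env] <;> linarith
    have hX' : |env σ θ τ q j| ≤ (2 + 2 / β) * Real.exp (β / 2 * S) := by
      have h1 : β / 2 * S + 1 ≤ Real.exp (β / 2 * S) := Real.add_one_le_exp _
      have h2 : 2 + S ≤ (2 + 2 / β) * (β / 2 * S + 1) := by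
        have : (2 + 2 / β) * (β / 2 * S + 1) = 2 + S + β * S + 2 / β := by field_simp; ring
        rw [this]
        have : 0 ≤ β * S := by positivity
        have : 0 ≤ 2 / β := by positivity
        linarith
      exact hX.trans (h2.trans (mul_le_mul_of_nonneg_left h1 (by positivity)))
    rw [map_mul, eval_X, abs_mul]
    calc _ ≤ (K * Real.exp (β / 2 * S)) * ((2 + 2 / β) * Real.exp (β / 2 * S)) :=
          mul_le_mul (h σ θ τ hs q) hX' (abs_nonneg _) (by positivity)
      _ = K * (2 + 2 / β) * (Real.exp (β / 2 * S) * Real.exp (β / 2 * S)) := by ring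
      _ = _ := by rw [← Real.exp_add]; congr 2; ring

/-- The weight `Q e^R`. -/
noncomputable def wt (σ θ τ : ℝ) (Q : MvPolynomial (Fin 6) ℝ) (q : ℝ × ℝ × ℝ) : ℝ :=
  eval (env σ θ τ q) Q * Real.exp (eval (env σ θ τ q) Rp)

/-- Gaussian domination of the weight: of the gain in `Rp_le`, a small part absorbs the polynomial
`Q`. The only loss in `τ` is `exp (μ τ²)`, for any `μ > 1/16`. -/
lemma wt_le (Q : MvPolynomial (Fin 6) ℝ) {μ : ℝ} (hμ : 1 / 16 < μ) :
    ∃ K b : ℝ, 0 ≤ K ∧ 0 < b ∧ ∀ σ θ τ : ℝ, σ ^ 4 + θ ^ 4 = 1 → ∀ q : ℝ × ℝ × ℝ,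
      |wt σ θ τ Q q| ≤ K * Real.exp (μ * τ ^ 2) *
        (Real.exp (-b * q.1 ^ 2) * (Real.exp (-b * q.2.1 ^ 2) * Real.exp (-b * q.2.2 ^ 2))) := by
  obtain ⟨c, hc, hR⟩ := Rp_le (δ := (μ - 1 / 16) / 2) (by linarith)
  set β := min ((μ - 1 / 16) / 2) (c / 2) with hβ
  have hβ0 : 0 < β := lt_min (by linarith) (by linarith)
  have hβ1 : β ≤ (μ - 1 / 16) / 2 := min_le_left _ _
  have hβ2 : β ≤ c / 2 := min_le_right _ _
  obtain ⟨K, hK, hP⟩ := poly_le Q β hβ0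
  refine ⟨K * Real.exp (3 * c / 2), c / 2, by positivity, by positivity, fun σ θ τ hs q => ?_⟩
  have key : β * (τ ^ 2 + (q.1 ^ 4 + q.2.1 ^ 4 + q.2.2 ^ 4)) + eval (env σ θ τ q) Rp ≤
      3 * c / 2 + μ * τ ^ 2 + (-(c / 2) * q.1 ^ 2 + (-(c / 2) * q.2.1 ^ 2 + -(c / 2) * q.2.2 ^ 2)) := by
    have h1 := hR σ θ τ hs q
    have h2 : β * τ ^ 2 ≤ (μ - 1 / 16) / 2 * τ ^ 2 := by gcongr
    have h3 : β * (q.1 ^ 4 + q.2.1 ^ 4 + q.2.2 ^ 4) ≤ c / 2 * (q.1 ^ 4 + q.2.1 ^ 4 + q.2.2 ^ 4) := by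
      gcongr
    have h4 : ∀ x : ℝ, c / 2 * x ^ 2 ≤ c / 2 * (1 + x ^ 4) := fun x =>
      mul_le_mul_of_nonneg_left (by nlinarith [sq_nonneg (x ^ 2 - 1)]) (by positivity)
    linarith [h4 q.1, h4 q.2.1, h4 q.2.2]
  rw [wt, abs_mul, Real.abs_exp]
  calc _ ≤ K * Real.exp (β * (τ ^ 2 + (q.1 ^ 4 + q.2.1 ^ 4 + q.2.2 ^ 4))) *
        Real.exp (eval (env σ θ τ q) Rp) :=
        mul_le_mul_of_nonneg_right (hP σ θ τ hs q) (Real.exp_nonneg _)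
    _ = K * Real.exp (β * (τ ^ 2 + (q.1 ^ 4 + q.2.1 ^ 4 + q.2.2 ^ 4)) +
        eval (env σ θ τ q) Rp) := by rw [Real.exp_add]; ring
    _ ≤ K * Real.exp (3 * c / 2 + μ * τ ^ 2 +
        (-(c / 2) * q.1 ^ 2 + (-(c / 2) * q.2.1 ^ 2 + -(c / 2) * q.2.2 ^ 2))) := by gcongr
    _ = _ := by simp only [Real.exp_add]; ring

lemma integrable_gauss {b : ℝ} (hb : 0 < b) : Integrable (fun q : ℝ × ℝ × ℝ =>
    Real.exp (-b * q.1 ^ 2) * (Real.exp (-b * q.2.1 ^ 2) * Real.exp (-b * q.2.2 ^ 2))) := by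
  have h1 := integrable_exp_neg_mul_sq hb
  exact h1.mul_prod (h1.mul_prod h1)

lemma continuous_env (σ θ τ : ℝ) : Continuous (env σ θ τ) := by
  refine continuous_pi fun j => ?_
  fin_cases j <;> simp [env] <;> fun_prop

lemma continuous_eval_env (σ θ τ : ℝ) (Q : MvPolynomial (Fin 6) ℝ) :
    Continuous fun q => eval (env σ θ τ q) Q :=
  (MvPolynomial.continuous_eval Q).comp (continuous_env σ θ τ)

lemma continuous_wt (σ θ τ : ℝ) (Q : MvPolynomial (Fin 6) ℝ) : Continuous (wt σ θ τ Q) :=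
  (continuous_eval_env σ θ τ Q).mul (continuous_eval_env σ θ τ Rp).rexp

lemma integrable_wt {σ θ : ℝ} (hs : σ ^ 4 + θ ^ 4 = 1) (τ : ℝ) (Q : MvPolynomial (Fin 6) ℝ) :
    Integrable (wt σ θ τ Q) := by
  obtain ⟨K, b, -, hb, h⟩ := wt_le Q (μ := 1) (by norm_num)
  exact ((integrable_gauss hb).const_mul _).mono' (continuous_wt σ θ τ Q).aestronglyMeasurable
    (Filter.Eventually.of_forall fun q => h σ θ τ hs q)

lemma wt_add (σ θ τ : ℝ) (P Q : MvPolynomial (Fin 6) ℝ) (q : ℝ × ℝ × ℝ) :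
    wt σ θ τ (P + Q) q = wt σ θ τ P q + wt σ θ τ Q q := by simp [wt, add_mul]

lemma wt_sub (σ θ τ : ℝ) (P Q : MvPolynomial (Fin 6) ℝ) (q : ℝ × ℝ × ℝ) :
    wt σ θ τ (P - Q) q = wt σ θ τ P q - wt σ θ τ Q q := by simp [wt, sub_mul]

/-! ### The oscillatory integrals -/

/-- The plane wave `e^{i(xξ + yη + zζ)}`. -/
noncomputable def wave (x y z : ℝ) (q : ℝ × ℝ × ℝ) : ℂ :=
  Complex.exp (((x * q.1 + y * q.2.1 + z * q.2.2 : ℝ) : ℂ) * Complex.I)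

lemma norm_wave (x y z : ℝ) (q : ℝ × ℝ × ℝ) : ‖wave x y z q‖ = 1 :=
  Complex.norm_exp_ofReal_mul_I _

lemma continuous_wave (x y z : ℝ) : Continuous (wave x y z) := by
  unfold wave; fun_prop

/-- The oscillatory integral `∫ e^{i(xξ + yη + zζ)} Q e^R`. -/
noncomputable def osc (σ θ τ : ℝ) (Q : MvPolynomial (Fin 6) ℝ) (x y z : ℝ) : ℂ :=
  ∫ q : ℝ × ℝ × ℝ, wave x y z q * (wt σ θ τ Q q : ℂ)

lemma integrable_wave_wt {σ θ : ℝ} (hs : σ ^ 4 + θ ^ 4 = 1) (τ : ℝ) (Q : MvPolynomial (Fin 6) ℝ)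
    (x y z : ℝ) : Integrable fun q => wave x y z q * (wt σ θ τ Q q : ℂ) :=
  (integrable_wt hs τ Q).ofReal.bdd_mul (c := 1) (continuous_wave x y z).aestronglyMeasurable
    (Filter.Eventually.of_forall fun q => (norm_wave x y z q).le)

/-- Differentiation of an oscillatory integral along a line in physical space brings down the
corresponding linear function of the frequencies. -/
lemma hasDerivAt_osc {σ θ : ℝ} (hs : σ ^ 4 + θ ^ 4 = 1) (τ : ℝ) (Q L : MvPolynomial (Fin 6) ℝ)
    (r : ℝ) {a b c a' b' c' : ℝ}
    (hL : ∀ q, a * q.1 + b * q.2.1 + c * q.2.2 = r * eval (env σ θ τ q) L) (u : ℝ) :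
    HasDerivAt (fun u => osc σ θ τ Q (a * u + a') (b * u + b') (c * u + c'))
      (Complex.I * r * osc σ θ τ (L * Q) (a * u + a') (b * u + b') (c * u + c')) u := by
  have hw : ∀ q, wt σ θ τ (L * Q) q = eval (env σ θ τ q) L * wt σ θ τ Q q := fun q => by
    simp [wt, mul_assoc]
  have main := hasDerivAt_integral_of_dominated_loc_of_deriv_le (μ := volume) (𝕜 := ℝ)
    (s := Set.univ) (x₀ := u)
    (F := fun u q => wave (a * u + a') (b * u + b') (c * u + c') q * (wt σ θ τ Q q : ℂ))
    (F' := fun u q => Complex.I * r *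
      (wave (a * u + a') (b * u + b') (c * u + c') q * (wt σ θ τ (L * Q) q : ℂ)))
    (bound := fun q => |r| * |wt σ θ τ (L * Q) q|)
    Filter.univ_mem
    (Filter.Eventually.of_forall fun u =>
      (integrable_wave_wt hs τ Q _ _ _).aestronglyMeasurable)
    (integrable_wave_wt hs τ Q _ _ _)
    ((integrable_wave_wt hs τ (L * Q) _ _ _).const_mul _).aestronglyMeasurable
    (Filter.Eventually.of_forall fun q u _ => by simp [norm_wave])
    ((integrable_wt hs τ (L * Q)).abs.const_mul _)
    (Filter.Eventually.of_forall fun q u _ => by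
      have h1 : HasDerivAt (fun u : ℝ => (a * u + a') * q.1 + (b * u + b') * q.2.1
          + (c * u + c') * q.2.2) (r * eval (env σ θ τ q) L) u := by
        rw [← hL q]
        have := ((hasDerivAt_id u).const_mul (a * q.1 + b * q.2.1 + c * q.2.2)).add_const
          (a' * q.1 + b' * q.2.1 + c' * q.2.2)
        rw [mul_one] at this
        refine this.congr_of_eventuallyEq (Filter.Eventually.of_forall fun w => ?_)
        simp only [id]; ring
      have h2 := ((h1.ofReal_comp.mul_const Complex.I).cexp).mul_const (wt σ θ τ Q q : ℂ)
      refine h2.congr_deriv ?_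
      rw [hw, wave]; push_cast; ring)
  have := main.2
  rw [integral_const_mul] at this
  exact this

/-- The action on polynomials of a frequency derivative of the weight `Q e^R`. -/
noncomputable def Dp (i : Fin 6) (Q : MvPolynomial (Fin 6) ℝ) : MvPolynomial (Fin 6) ℝ :=
  pderiv i Q + Q * pderiv i Rp

lemma hasDerivAt_eval (Q : MvPolynomial (Fin 6) ℝ) (i : Fin 6) (e : ℝ → Fin 6 → ℝ) (s : ℝ)
    (he : ∀ j, HasDerivAt (fun s => e s j) (Pi.single (M := fun _ => ℝ) i 1 j) s) :
    HasDerivAt (fun s => eval (e s) Q) (eval (e s) (pderiv i Q)) s := by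
  induction Q using MvPolynomial.induction_on with
  | C a => simpa using hasDerivAt_const s a
  | add P Q hP hQ => simpa using hP.fun_add hQ
  | mul_X P j hP =>
    have h := hP.fun_mul (he j)
    simp only [map_mul, eval_X]
    refine h.congr_deriv ?_
    rw [Derivation.leibniz, pderiv_X]
    by_cases hij : j = i
    · subst hij; simp; ring
    · simp [hij]; ring

/-- Integration by parts in the frequency direction `v`, the `i`-th coordinate direction. -/
lemma osc_Dp {σ θ : ℝ} (hs : σ ^ 4 + θ ^ 4 = 1) (τ : ℝ) (Q : MvPolynomial (Fin 6) ℝ)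
    (i : Fin 6) (v : ℝ × ℝ × ℝ) (x y z w : ℝ)
    (hv : ∀ q s j, env σ θ τ (q + s • v) j =
      env σ θ τ q j + s * Pi.single (M := fun _ => ℝ) i 1 j)
    (hw : x * v.1 + y * v.2.1 + z * v.2.2 = w) :
    osc σ θ τ (Dp i Q) x y z = -(Complex.I * w) * osc σ θ τ Q x y z := by
  have := isAddHaar_vol
  have hwave : ∀ q, HasLineDerivAt ℝ (wave x y z) (Complex.I * w * wave x y z q) q v := fun q => by
    unfold HasLineDerivAt
    have h1 : HasDerivAt (fun s : ℝ => x * (q + s • v).1 + y * (q + s • v).2.1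
        + z * (q + s • v).2.2) w 0 := by
      have := ((hasDerivAt_id (0:ℝ)).const_mul w).const_add (x * q.1 + y * q.2.1 + z * q.2.2)
      rw [mul_one] at this
      refine this.congr_of_eventuallyEq (Filter.Eventually.of_forall fun s => ?_)
      simp [← hw]; ring
    have h2 := (h1.ofReal_comp.mul_const Complex.I).cexp
    refine h2.congr_deriv ?_
    simp [wave]; ring
  have hwt : ∀ q, HasLineDerivAt ℝ (fun q => (wt σ θ τ Q q : ℂ)) (wt σ θ τ (Dp i Q) q : ℂ) q v :=
    fun q => by
    unfold HasLineDerivAt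
    have he : ∀ j, HasDerivAt (fun s : ℝ => env σ θ τ (q + s • v) j)
        (Pi.single (M := fun _ => ℝ) i 1 j) 0 := fun j => by
      simp only [hv]
      simpa using ((hasDerivAt_id (0:ℝ)).mul_const
        (Pi.single (M := fun _ => ℝ) i 1 j)).const_add (env σ θ τ q j)
    have h1 := hasDerivAt_eval Q i (fun s => env σ θ τ (q + s • v)) 0 he
    have h2 := hasDerivAt_eval Rp i (fun s => env σ θ τ (q + s • v)) 0 he
    have h3 := (h1.fun_mul h2.exp).ofReal_comp
    refine h3.congr_deriv ?_
    simp [wt, Dp]; ring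
  have hi : ∀ q, Complex.I * w * wave x y z q * (wt σ θ τ Q q : ℂ) =
      Complex.I * w * (wave x y z q * (wt σ θ τ Q q : ℂ)) := fun q => by ring
  have main := integral_bilinear_hasLineDerivAt_right_eq_neg_left_of_integrable
    (μ := (volume : Measure (ℝ × ℝ × ℝ)))
    (B := ContinuousLinearMap.mul ℝ ℂ) (f := wave x y z)
    (f' := fun q => Complex.I * w * wave x y z q)
    (g := fun q => (wt σ θ τ Q q : ℂ)) (g' := fun q => (wt σ θ τ (Dp i Q) q : ℂ)) (v := v)
    (by simp only [ContinuousLinearMap.mul_apply', hi]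
        exact (integrable_wave_wt hs τ Q x y z).const_mul _)
    (by simpa using integrable_wave_wt hs τ (Dp i Q) x y z)
    (by simpa using integrable_wave_wt hs τ Q x y z)
    (fun q _ => hwave q) (fun q _ => hwt q)
  simp only [ContinuousLinearMap.mul_apply', hi, integral_const_mul] at main
  rw [osc, main, osc]; ring

/-- The operator `1 - ∂ᵢ²` on weights, which corresponds to multiplication by `1 + xᵢ²` in
physical space. -/
noncomputable def Ep (i : Fin 6) (Q : MvPolynomial (Fin 6) ℝ) : MvPolynomial (Fin 6) ℝ :=
  Q - Dp i (Dp i Q)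

lemma osc_Ep {σ θ : ℝ} (hs : σ ^ 4 + θ ^ 4 = 1) (τ : ℝ) (Q : MvPolynomial (Fin 6) ℝ)
    (i : Fin 6) (v : ℝ × ℝ × ℝ) (x y z w : ℝ)
    (hv : ∀ q s j, env σ θ τ (q + s • v) j =
      env σ θ τ q j + s * Pi.single (M := fun _ => ℝ) i 1 j)
    (hw : x * v.1 + y * v.2.1 + z * v.2.2 = w) :
    osc σ θ τ (Ep i Q) x y z = ((1 + w ^ 2 : ℝ) : ℂ) * osc σ θ τ Q x y z := by
  have hsub : osc σ θ τ (Ep i Q) x y z =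
      osc σ θ τ Q x y z - osc σ θ τ (Dp i (Dp i Q)) x y z := by
    unfold osc
    rw [← integral_sub (integrable_wave_wt hs τ _ x y z) (integrable_wave_wt hs τ _ x y z)]
    congr 1; funext q
    rw [Ep, wt_sub]; push_cast; ring
  rw [hsub, osc_Dp hs τ _ i v x y z w hv hw, osc_Dp hs τ _ i v x y z w hv hw]
  push_cast
  linear_combination (-(w : ℂ) ^ 2 * osc σ θ τ Q x y z) * Complex.I_sq

/-- The profile that dominates the rescaled Green's function and its derivatives. -/
noncomputable def prof (p : ℝ × ℝ × ℝ) : ℝ :=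
  (1 + p.1 ^ 2)⁻¹ * ((1 + p.2.1 ^ 2)⁻¹ * (1 + p.2.2 ^ 2)⁻¹)

/-- The key pointwise estimate, uniform in the parameters: applying `1 - ∂ᵢ²` to the weight in the
three frequency directions multiplies the oscillatory integral by `1 / prof`, and the new weight,
again a polynomial times `e^R`, is bounded in `L¹` by a multiple of `exp (μ τ²)`. -/
lemma osc_le (Q : MvPolynomial (Fin 6) ℝ) {μ : ℝ} (hμ : 1 / 16 < μ) :
    ∃ K : ℝ, 0 < K ∧ ∀ σ θ τ : ℝ, σ ^ 4 + θ ^ 4 = 1 → ∀ x y z : ℝ,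
      ‖osc σ θ τ Q x y z‖ ≤ K * Real.exp (μ * τ ^ 2) * prof (x, y, z) := by
  obtain ⟨K, b, hK, hb, h⟩ := wt_le (Ep 0 (Ep 1 (Ep 2 Q))) hμ
  set N : ℝ := ∫ q : ℝ × ℝ × ℝ,
    Real.exp (-b * q.1 ^ 2) * (Real.exp (-b * q.2.1 ^ 2) * Real.exp (-b * q.2.2 ^ 2)) with hN
  have hN0 : 0 ≤ N := integral_nonneg fun q => by positivity
  refine ⟨K * N + 1, by positivity, fun σ θ τ hs x y z => ?_⟩
  have e0 := osc_Ep hs τ (Ep 1 (Ep 2 Q)) 0 (1, 0, 0) x y z x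
    (fun q s j => by fin_cases j <;> simp [env]) (by simp)
  have e1 := osc_Ep hs τ (Ep 2 Q) 1 (0, 1, 0) x y z y
    (fun q s j => by fin_cases j <;> simp [env]) (by simp)
  have e2 := osc_Ep hs τ Q 2 (0, 0, 1) x y z z
    (fun q s j => by fin_cases j <;> simp [env]) (by simp)
  have hb' : ‖osc σ θ τ (Ep 0 (Ep 1 (Ep 2 Q))) x y z‖ ≤ K * Real.exp (μ * τ ^ 2) * N := by
    rw [hN, ← integral_const_mul]
    refine norm_integral_le_of_norm_le ((integrable_gauss hb).const_mul _)
      (Filter.Eventually.of_forall fun q => ?_)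
    rw [norm_mul, norm_wave, one_mul, Complex.norm_real]
    exact h σ θ τ hs q
  rw [e0, e1, e2, norm_mul, norm_mul, norm_mul, Complex.norm_real, Complex.norm_real,
    Complex.norm_real, Real.norm_of_nonneg (by positivity : (0:ℝ) ≤ 1 + x ^ 2),
    Real.norm_of_nonneg (by positivity : (0:ℝ) ≤ 1 + y ^ 2),
    Real.norm_of_nonneg (by positivity : (0:ℝ) ≤ 1 + z ^ 2)] at hb'
  have hpos : 0 < (1 + x ^ 2) * ((1 + y ^ 2) * (1 + z ^ 2)) := by positivity
  have : prof (x, y, z) = ((1 + x ^ 2) * ((1 + y ^ 2) * (1 + z ^ 2)))⁻¹ := by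
    simp [prof, mul_comm]
  rw [this, ← div_eq_mul_inv, le_div_iff₀ hpos]
  have he := Real.exp_pos (μ * τ ^ 2)
  nlinarith

/-! ### Rescaling the Green's function -/

lemma integral_symbol (p q r κ t : ℝ) :
    ∫ s in (0:ℝ)..t, ((p + q * s + r * s ^ 2) - κ - 4 * (p + q * s + r * s ^ 2) ^ 2) =
      (p - κ - 4 * p ^ 2) * t + (q - 8 * p * q) * t ^ 2 / 2
        + (r - 4 * (q ^ 2 + 2 * p * r)) * t ^ 3 / 3 - 2 * q * r * t ^ 4 - 4 * r ^ 2 * t ^ 5 / 5 := by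
  have hd : ∀ s ∈ Set.uIcc (0:ℝ) t, HasDerivAt (fun s => (p - κ - 4 * p ^ 2) * s
      + (q - 8 * p * q) / 2 * s ^ 2 + (r - 4 * (q ^ 2 + 2 * p * r)) / 3 * s ^ 3
      - 2 * q * r * s ^ 4 - 4 * r ^ 2 / 5 * s ^ 5)
      ((p + q * s + r * s ^ 2) - κ - 4 * (p + q * s + r * s ^ 2) ^ 2) s := fun s _ => by
    have h := (((((hasDerivAt_id s).const_mul (p - κ - 4 * p ^ 2)).fun_add
      ((hasDerivAt_pow 2 s).const_mul ((q - 8 * p * q) / 2))).fun_add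
      ((hasDerivAt_pow 3 s).const_mul ((r - 4 * (q ^ 2 + 2 * p * r)) / 3))).fun_sub
      ((hasDerivAt_pow 4 s).const_mul (2 * q * r))).fun_sub
      ((hasDerivAt_pow 5 s).const_mul (4 * r ^ 2 / 5))
    refine h.congr_deriv ?_
    norm_num
    ring
  rw [intervalIntegral.integral_eq_sub_of_hasDerivAt hd
    (Continuous.intervalIntegrable (by fun_prop) _ _)]
  ring

/-- In the rescaled frequencies, centred at the midpoint `t/2` of the time interval, the spectral
Green's function is `e^{-κt + R}`. -/
lemma Ghat2_eq {A κ T σ : ℝ} (hT : 0 < T) (hσ : 0 < σ) (ξ η ζ : ℝ) :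
    Ghat2 A κ (T ^ 4) ξ η ζ = Real.exp (-κ * T ^ 4) *
      Real.exp (eval (env σ (A * T ^ 4 * σ) (T ^ 2)
        (T / σ * ξ, T * η + A * T ^ 5 / 2 * ξ, T * ζ)) Rp) := by
  have h : ∀ s, vA A ξ η ζ s =
      (ξ ^ 2 + η ^ 2 + ζ ^ 2) + (2 * A * ξ * η) * s + (A ^ 2 * ξ ^ 2) * s ^ 2 := fun s => by
    rw [vA]; ring
  rw [Ghat2, ← Real.exp_add, eval_Rp]
  simp only [h]
  rw [integral_symbol]
  congr 1
  field_simp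
  ring

/-- The rescaled position at which the oscillatory integral is evaluated. -/
noncomputable def pos (A T σ : ℝ) (p p' : ℝ × ℝ × ℝ) : ℝ × ℝ × ℝ :=
  (σ / T * (p.1 - p'.1 - A * T ^ 4 / 2 * (p.2.1 + p'.2.1)), 1 / T * (p.2.1 - p'.2.1),
    1 / T * (p.2.2 - p'.2.2))

/-- `c` times the oscillatory integral with amplitude `Q`, as a function of the unprimed physical
variables; derivatives in these variables stay in this class. -/
noncomputable def oscP (A T σ : ℝ) (p' : ℝ × ℝ × ℝ) (c : ℂ) (Q : MvPolynomial (Fin 6) ℝ)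
    (p : ℝ × ℝ × ℝ) : ℂ :=
  c * osc σ (A * T ^ 4 * σ) (T ^ 2) Q (pos A T σ p p').1 (pos A T σ p p').2.1
    (pos A T σ p p').2.2

/-- The change of frequencies of `Ghat2_eq` turns the Green's function, at time `t = T⁴`, into a
rescaled oscillatory integral; its Jacobian is `σ / T³`. -/
lemma GreenG_eq {A κ T σ : ℝ} (hT : 0 < T) (hσ : 0 < σ) (p p' : ℝ × ℝ × ℝ) :
    GreenG A κ (T ^ 4) p.1 p.2.1 p.2.2 p'.1 p'.2.1 p'.2.2 =
      oscP A T σ p' ((σ / T ^ 3 * Real.exp (-κ * T ^ 4) : ℝ) : ℂ) 1 p := by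
  set M : Matrix (Fin 3) (Fin 3) ℝ := !![T / σ, 0, 0; A * T ^ 5 / 2, T, 0; 0, 0, T] with hM
  have hdet : M.det = T ^ 3 / σ := by
    rw [hM, Matrix.det_fin_three]; simp; ring
  have hdet0 : M.det ≠ 0 := by rw [hdet]; positivity
  have hmap := map_affine_vol M hdet0 0
  set S : ℝ × ℝ × ℝ → ℝ × ℝ × ℝ :=
    fun q => (T / σ * q.1, T * q.2.1 + A * T ^ 5 / 2 * q.1, T * q.2.2) with hS
  have hmapS : Measure.map S volume = ENNReal.ofReal (σ / T ^ 3) • volume := by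
    have e : |M.det⁻¹| = σ / T ^ 3 := by
      rw [hdet, inv_div, abs_of_pos (by positivity)]
    rw [← e, ← hmap]
    congr 1
    funext q
    simp [hM, hS]; ring
  have hSm : Measurable S := by
    have : Continuous S := by rw [hS]; fun_prop
    exact this.measurable
  set θ := A * T ^ 4 * σ with hθ
  set P := pos A T σ p p' with hP
  have hcont : Continuous fun q => wave P.1 P.2.1 P.2.2 q * (wt σ θ (T ^ 2) 1 q : ℂ) :=
    (continuous_wave _ _ _).mul (Complex.continuous_ofReal.comp (continuous_wt _ _ _ _))
  have hint : ∫ q, wave P.1 P.2.1 P.2.2 (S q) * (wt σ θ (T ^ 2) 1 (S q) : ℂ) =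
      ((σ / T ^ 3 : ℝ) : ℂ) * osc σ θ (T ^ 2) 1 P.1 P.2.1 P.2.2 := by
    rw [← integral_map (φ := S) hSm.aemeasurable hcont.aestronglyMeasurable, hmapS,
      integral_smul_measure, ENNReal.toReal_ofReal (by positivity), osc, Complex.real_smul]
  rw [oscP, ← hP, ← hθ]
  push_cast
  rw [mul_right_comm]
  push_cast at hint
  rw [← hint, ← integral_mul_const, GreenG]
  congr 1
  funext q
  rw [Ghat2_eq hT hσ, wave, wt, ← Complex.exp_add]
  have hph : P.1 * (S q).1 + P.2.1 * (S q).2.1 + P.2.2 * (S q).2.2 =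
      (p.1 * q.1 + p.2.1 * q.2.1 + p.2.2 * q.2.2) -
      (p'.1 * q.1 + p'.2.1 * (q.2.1 + A * q.1 * T ^ 4) + p'.2.2 * q.2.2) := by
    simp only [hP, hS, pos]
    field_simp
    ring
  rw [hph]
  simp only [map_one, one_mul]
  push_cast
  rw [mul_comm (Complex.exp (-κ * T ^ 4)), ← mul_assoc]
  congr 3
  ring

/-! ### Physical derivatives -/

lemma iterate_oscP {A T σ : ℝ} {p' : ℝ × ℝ × ℝ}
    {D : (ℝ × ℝ × ℝ → ℂ) → ℝ × ℝ × ℝ → ℂ} {a : ℂ} {L : MvPolynomial (Fin 6) ℝ}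
    (h : ∀ c Q, D (oscP A T σ p' c Q) = oscP A T σ p' (c * a) (L * Q)) (k : ℕ) :
    ∀ c Q, D^[k] (oscP A T σ p' c Q) = oscP A T σ p' (c * a ^ k) (L ^ k * Q) := by
  induction k with
  | zero => intro c Q; simp
  | succ k ih =>
    intro c Q
    rw [Function.iterate_succ_apply, h, ih]
    congr 1 <;> ring

lemma pdx_oscP {A T σ : ℝ} (hs : σ ^ 4 + (A * T ^ 4 * σ) ^ 4 = 1)
    (p' : ℝ × ℝ × ℝ) (c : ℂ) (Q : MvPolynomial (Fin 6) ℝ) :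
    pdx (oscP A T σ p' c Q) =
    oscP A T σ p' (c * (Complex.I * (σ / T : ℝ))) (X 0 * Q) := by
  funext p
  have h := (hasDerivAt_osc hs (T ^ 2) Q (X 0) (σ / T) (a := σ / T) (b := 0) (c := 0)
    (a' := σ / T * (- p'.1 - A * T ^ 4 / 2 * (p.2.1 + p'.2.1)))
    (b' := (pos A T σ p p').2.1) (c' := (pos A T σ p p').2.2)
    (fun q => by simp [env]) p.1).const_mul c
  have e : ∀ u, σ / T * u + σ / T * (- p'.1 - A * T ^ 4 / 2 * (p.2.1 + p'.2.1)) =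
      (pos A T σ (u, p.2.1, p.2.2) p').1 := fun u => by simp only [pos]; ring
  simp only [e, zero_mul, zero_add] at h
  refine h.deriv.trans ?_
  rw [oscP, mul_assoc c]

lemma pdy_oscP {A T σ : ℝ} (hs : σ ^ 4 + (A * T ^ 4 * σ) ^ 4 = 1)
    (p' : ℝ × ℝ × ℝ) (c : ℂ) (Q : MvPolynomial (Fin 6) ℝ) :
    pdy (oscP A T σ p' c Q) =
    oscP A T σ p' (c * (Complex.I * (1 / T : ℝ))) ((X 1 - C (1 / 2) * X 3 * X 0) * Q) := by
  funext p
  have h := (hasDerivAt_osc hs (T ^ 2) Q (X 1 - C (1 / 2) * X 3 * X 0) (1 / T)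
    (a := -(σ / T * (A * T ^ 4 / 2))) (b := 1 / T) (c := 0)
    (a' := σ / T * (p.1 - p'.1 - A * T ^ 4 / 2 * p'.2.1))
    (b' := - (1 / T * p'.2.1)) (c' := (pos A T σ p p').2.2)
    (fun q => by simp [env]; ring) p.2.1).const_mul c
  have e : ∀ u, -(σ / T * (A * T ^ 4 / 2)) * u + σ / T * (p.1 - p'.1 - A * T ^ 4 / 2 * p'.2.1) =
      (pos A T σ (p.1, u, p.2.2) p').1 := fun u => by simp only [pos]; ring
  have e' : ∀ u, 1 / T * u + - (1 / T * p'.2.1) = (pos A T σ (p.1, u, p.2.2) p').2.1 := fun u => by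
    simp only [pos]; ring
  simp only [e, e', zero_mul, zero_add] at h
  refine h.deriv.trans ?_
  rw [oscP, mul_assoc c]

lemma pdz_oscP {A T σ : ℝ} (hs : σ ^ 4 + (A * T ^ 4 * σ) ^ 4 = 1)
    (p' : ℝ × ℝ × ℝ) (c : ℂ) (Q : MvPolynomial (Fin 6) ℝ) :
    pdz (oscP A T σ p' c Q) =
    oscP A T σ p' (c * (Complex.I * (1 / T : ℝ))) (X 2 * Q) := by
  funext p
  have h := (hasDerivAt_osc hs (T ^ 2) Q (X 2) (1 / T) (a := 0) (b := 0) (c := 1 / T)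
    (a' := (pos A T σ p p').1) (b' := (pos A T σ p p').2.1) (c' := - (1 / T * p'.2.2))
    (fun q => by simp [env]) p.2.2).const_mul c
  have e : ∀ u, 1 / T * u + - (1 / T * p'.2.2) = (pos A T σ (p.1, p.2.1, u) p').2.2 := fun u => by
    simp only [pos]; ring
  simp only [e, zero_mul, zero_add] at h
  refine h.deriv.trans ?_
  rw [oscP, mul_assoc c]

lemma pD_oscP {A T σ : ℝ} (hs : σ ^ 4 + (A * T ^ 4 * σ) ^ 4 = 1)
    (p' : ℝ × ℝ × ℝ) (c : ℂ) (Q : MvPolynomial (Fin 6) ℝ)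
    (k₁ k₂ k₃ : ℕ) : pD k₁ k₂ k₃ (oscP A T σ p' c Q) =
    oscP A T σ p' (c * (Complex.I * (1 / T : ℝ)) ^ k₃ * (Complex.I * (1 / T : ℝ)) ^ k₂ *
        (Complex.I * (σ / T : ℝ)) ^ k₁)
      (X 0 ^ k₁ * ((X 1 - C (1 / 2) * X 3 * X 0) ^ k₂ * (X 2 ^ k₃ * Q))) := by
  have hx := iterate_oscP (pdx_oscP hs p')
  rw [pD, iterate_oscP (pdz_oscP hs p'), iterate_oscP (pdy_oscP hs p'), hx]

/-- The pointwise bound on the derivatives of the Green's function. The hypothesis on `κ` enters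
here: `e^{-κt}` beats the loss `e^{(κ-ε)t}` of `osc_le`, available because `κ - ε > 1/16`. -/
lemma pD_GreenG_le {κ ε : ℝ} (hκ : 1 / 16 + ε < κ) (k₁ k₂ k₃ : ℕ) :
    ∃ K : ℝ, 0 < K ∧ ∀ A T σ : ℝ, 0 < T → 0 < σ → σ ^ 4 + (A * T ^ 4 * σ) ^ 4 = 1 →
      ∀ p p' : ℝ × ℝ × ℝ,
        ‖pD k₁ k₂ k₃ (fun p => GreenG A κ (T ^ 4) p.1 p.2.1 p.2.2 p'.1 p'.2.1 p'.2.2) p‖ ≤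
          K * Real.exp (-ε * T ^ 4) * (σ ^ (1 + k₁) / T ^ (3 + (k₁ + k₂ + k₃))) *
            prof (pos A T σ p p') := by
  obtain ⟨K, hK, h⟩ := osc_le (X 0 ^ k₁ * ((X 1 - C (1 / 2) * X 3 * X 0) ^ k₂ * (X 2 ^ k₃ * 1)))
    (μ := κ - ε) (by linarith)
  refine ⟨K, hK, fun A T σ hT hσ hs p p' => ?_⟩
  have hG : (fun p : ℝ × ℝ × ℝ => GreenG A κ (T ^ 4) p.1 p.2.1 p.2.2 p'.1 p'.2.1 p'.2.2) =
      oscP A T σ p' ((σ / T ^ 3 * Real.exp (-κ * T ^ 4) : ℝ) : ℂ) 1 :=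
    funext fun p => GreenG_eq hT hσ p p'
  rw [hG, pD_oscP hs, oscP]
  simp only [norm_mul, norm_pow, Complex.norm_I, Complex.norm_real, one_mul]
  rw [Real.norm_of_nonneg (by positivity : (0:ℝ) ≤ 1 / T),
    Real.norm_of_nonneg (by positivity : (0:ℝ) ≤ σ / T),
    Real.norm_of_nonneg (by positivity : (0:ℝ) ≤ σ / T ^ 3), Real.norm_of_nonneg (Real.exp_nonneg _)]
  refine (mul_le_mul_of_nonneg_left (h σ (A * T ^ 4 * σ) (T ^ 2) hs _ _ _)
    (by positivity)).trans (le_of_eq ?_)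
  have he : Real.exp (-ε * T ^ 4) = Real.exp (-κ * T ^ 4) * Real.exp ((κ - ε) * (T ^ 2) ^ 2) := by
    rw [← Real.exp_add]; congr 1; ring
  rw [he]
  simp only [div_pow, one_pow, pow_add]
  field_simp

/-! ### Norms of the profile -/

lemma memLp_prof (p : ℝ≥0∞) (hp : 1 ≤ p) : MemLp prof p volume := by
  have h0 : ∀ x : ℝ, 0 < (1 + x ^ 2)⁻¹ := fun x => by positivity
  have h1 : ∀ x : ℝ, (1 + x ^ 2)⁻¹ ≤ 1 := fun x => inv_le_one_of_one_le₀ (by nlinarith [sq_nonneg x])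
  have hi : Integrable prof := by
    have := integrable_inv_one_add_sq
    exact this.mul_prod (this.mul_prod this)
  have hb : ∀ q, ‖prof q‖ ≤ 1 := fun q => by
    rw [prof, Real.norm_of_nonneg (by positivity)]
    exact mul_le_one₀ (h1 _) (by positivity) (mul_le_one₀ (h1 _) (by positivity) (h1 _))
  have htop : MemLp prof ∞ volume :=
    memLp_top_of_bound hi.aestronglyMeasurable 1 (Filter.Eventually.of_forall hb)
  rcases eq_or_ne p ∞ with rfl | hp'
  · exact htop
  have hp0 : p ≠ 0 := (zero_lt_one.trans_le hp).ne'
  have hpr : 1 ≤ p.toReal := by simpa using ENNReal.toReal_mono hp' hp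
  rw [← integrable_norm_rpow_iff hi.aestronglyMeasurable hp0 hp']
  refine hi.norm.mono' (hi.aestronglyMeasurable.norm.aemeasurable.pow_const _).aestronglyMeasurable
    (Filter.Eventually.of_forall fun q => ?_)
  rw [Real.norm_of_nonneg (by positivity)]
  simpa using Real.rpow_le_rpow_of_exponent_ge' (norm_nonneg _) (hb q) zero_le_one hpr

lemma eLpNorm_prof_affine (M : Matrix (Fin 3) (Fin 3) ℝ) (hM : M.det ≠ 0) (m : ℝ × ℝ × ℝ)
    {p : ℝ≥0∞} (hp : 1 ≤ p) :
    eLpNorm (fun q : ℝ × ℝ × ℝ => prof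
      (M 0 0 * q.1 + M 0 1 * q.2.1 + M 0 2 * q.2.2 + m.1,
       M 1 0 * q.1 + M 1 1 * q.2.1 + M 1 2 * q.2.2 + m.2.1,
       M 2 0 * q.1 + M 2 1 * q.2.1 + M 2 2 * q.2.2 + m.2.2)) p volume =
      ENNReal.ofReal (|M.det⁻¹| ^ p⁻¹.toReal * (eLpNorm prof p volume).toReal) := by
  have hc : Continuous prof := by
    unfold prof
    have h : ∀ x : ℝ, 1 + x ^ 2 ≠ 0 := fun x => by positivity
    exact ((by fun_prop : Continuous fun p : ℝ × ℝ × ℝ => 1 + p.1 ^ 2).inv₀ fun _ => h _).mul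
      (((by fun_prop : Continuous fun p : ℝ × ℝ × ℝ => 1 + p.2.1 ^ 2).inv₀ fun _ => h _).mul
      ((by fun_prop : Continuous fun p : ℝ × ℝ × ℝ => 1 + p.2.2 ^ 2).inv₀ fun _ => h _))
  have hpos : 0 < |M.det⁻¹| := abs_pos.2 (inv_ne_zero hM)
  have h := eLpNorm_map_measure (p := p) (μ := volume) (g := prof)
    (f := fun q : ℝ × ℝ × ℝ =>
      (M 0 0 * q.1 + M 0 1 * q.2.1 + M 0 2 * q.2.2 + m.1,
       M 1 0 * q.1 + M 1 1 * q.2.1 + M 1 2 * q.2.2 + m.2.1,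
       M 2 0 * q.1 + M 2 1 * q.2.1 + M 2 2 * q.2.2 + m.2.2))
    hc.aestronglyMeasurable (by fun_prop)
  rw [map_affine_vol M hM m, eLpNorm_smul_measure_of_ne_zero (by simpa using hM),
    one_div] at h
  rw [ENNReal.ofReal_mul (by positivity), ENNReal.ofReal_toReal (memLp_prof p hp).eLpNorm_ne_top,
    ← ENNReal.ofReal_rpow_of_pos hpos, ← smul_eq_mul, h]
  rfl

/-- The `s`-th power is the Jacobian factor in the `L^p` norm, `s = 1/p`; with `T = t^{1/4}` and
`σ = (1 + (A t)⁴)^{-1/4}` it turns the pointwise bound into the claimed rate. -/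
lemma scaling_identity {A t T σ : ℝ} (hT : 0 < T) (hσ : 0 < σ) (htT : t = T ^ 4)
    (hσA : σ ^ 4 * (1 + (A * t) ^ 4) = 1) (s : ℝ) (k₁ k : ℕ) :
    σ ^ (1 + k₁) / T ^ (3 + k) * (T ^ 3 / σ) ^ s =
      t ^ (-(3:ℝ)/4 * (1 - s) - (k : ℝ)/4) *
        (1 + (A * t) ^ 4) ^ (-(1:ℝ)/4 * (1 - s) - (k₁ : ℝ)/4) := by
  have h1 : 1 + (A * t) ^ 4 = σ ^ (-4 : ℝ) := by
    rw [Real.rpow_neg hσ.le]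
    have : (σ ^ (4:ℝ)) = σ ^ 4 := by exact_mod_cast Real.rpow_natCast σ 4
    rw [this]
    exact eq_inv_of_mul_eq_one_right hσA
  have h2 : t = T ^ (4 : ℝ) := by
    rw [htT]; exact_mod_cast (Real.rpow_natCast T 4).symm
  rw [h1, h2, ← Real.rpow_mul hσ.le, ← Real.rpow_mul hT.le, Real.div_rpow (by positivity) hσ.le,
    ← Real.rpow_natCast, ← Real.rpow_natCast, ← Real.rpow_natCast T 3, ← Real.rpow_mul hT.le,
    div_mul_div_comm, mul_comm (σ ^ _), mul_comm (T ^ ((3 + k : ℕ) : ℝ)), ← div_mul_div_comm,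
    div_mul_div_comm, mul_comm (σ ^ s), ← div_mul_div_comm, ← Real.rpow_sub hT, ← Real.rpow_sub hσ]
  congr 2 <;> push_cast <;> ring


/-! ### The norm estimates -/

/-- For `k = k₁ + k₂ + k₃ ≤ 6` and every `p ≥ 1` (including `p = ∞`) there
is `C > 0` such that for all `t > 0`, uniformly in the fixed point, the `L^p` norms (in the
unprimed, resp. primed, variables) of `∂_x^{k₁} ∂_y^{k₂} ∂_z^{k₃} G` (derivatives in the
unprimed variables) are bounded by
`C e^{-ε t} t^{-(3/4)(1 - 1/p) - k/4} (1 + (A t)⁴)^{-(1/4)(1 - 1/p) - k₁/4}`. -/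
theorem stmt_13 (A κ ε : ℝ) (hA : 0 < A) (hκ0 : 0 < κ) (hε : 0 < ε)
    (hκ : 1 / 16 + ε < κ) (k₁ k₂ k₃ : ℕ) (hk : k₁ + k₂ + k₃ ≤ 6) :
    ∀ p : ℝ≥0∞, 1 ≤ p → ∃ C : ℝ, 0 < C ∧ ∀ t : ℝ, 0 < t →
      (∀ x' y' z' : ℝ,
        eLpNorm (fun q : ℝ × ℝ × ℝ =>
            pD k₁ k₂ k₃
              (fun p' : ℝ × ℝ × ℝ => GreenG A κ t p'.1 p'.2.1 p'.2.2 x' y' z') q)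
          p volume ≤
          ENNReal.ofReal (C * Real.exp (-ε * t) *
            t ^ (-(3:ℝ)/4 * (1 - p⁻¹.toReal) - (k₁ + k₂ + k₃ : ℝ)/4) *
            (1 + (A * t) ^ 4) ^ (-(1:ℝ)/4 * (1 - p⁻¹.toReal) - (k₁ : ℝ)/4))) ∧
      (∀ x y z : ℝ,
        eLpNorm (fun q : ℝ × ℝ × ℝ =>
            pD k₁ k₂ k₃
              (fun p' : ℝ × ℝ × ℝ => GreenG A κ t p'.1 p'.2.1 p'.2.2 q.1 q.2.1 q.2.2)
              (x, y, z))
          p volume ≤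
          ENNReal.ofReal (C * Real.exp (-ε * t) *
            t ^ (-(3:ℝ)/4 * (1 - p⁻¹.toReal) - (k₁ + k₂ + k₃ : ℝ)/4) *
            (1 + (A * t) ^ 4) ^ (-(1:ℝ)/4 * (1 - p⁻¹.toReal) - (k₁ : ℝ)/4))) := by
  intro p hp
  obtain ⟨K, hK, hbound⟩ := pD_GreenG_le hκ k₁ k₂ k₃
  set N := (eLpNorm prof p volume).toReal with hN
  have hN0 : 0 ≤ N := ENNReal.toReal_nonneg
  refine ⟨K * (N + 1), by positivity, fun t ht => ?_⟩
  set T : ℝ := t ^ (1 / 4 : ℝ) with hTdef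
  have hT : 0 < T := Real.rpow_pos_of_pos ht _
  have htT : t = T ^ 4 := by
    rw [hTdef, ← Real.rpow_natCast, ← Real.rpow_mul ht.le]; norm_num
  set B : ℝ := 1 + (A * t) ^ 4 with hB
  have hB0 : 0 < B := by positivity
  set σ : ℝ := B ^ (-(1 / 4) : ℝ) with hσdef
  have hσ : 0 < σ := Real.rpow_pos_of_pos hB0 _
  have hσB : σ ^ 4 * B = 1 := by
    rw [hσdef, ← Real.rpow_natCast, ← Real.rpow_mul hB0.le]
    norm_num [Real.rpow_neg_one]
    exact inv_mul_cancel₀ hB0.ne'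
  have hs : σ ^ 4 + (A * T ^ 4 * σ) ^ 4 = 1 := by
    rw [← htT, ← hσB, hB]; ring
  have hid := scaling_identity hT hσ htT hσB p⁻¹.toReal k₁ (k₁ + k₂ + k₃)
  set W : ℝ := K * Real.exp (-ε * T ^ 4) * (σ ^ (1 + k₁) / T ^ (3 + (k₁ + k₂ + k₃))) with hW
  have hW0 : 0 ≤ W := by positivity
  -- Both norms reduce to that of the profile composed with an affine map of determinant `± σ/T³`.
  have key : ∀ (M : Matrix (Fin 3) (Fin 3) ℝ) (m : ℝ × ℝ × ℝ), |M.det| = σ / T ^ 3 →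
      ∀ f : ℝ × ℝ × ℝ → ℂ, (∀ q, ‖f q‖ ≤ W * prof
        (M 0 0 * q.1 + M 0 1 * q.2.1 + M 0 2 * q.2.2 + m.1,
         M 1 0 * q.1 + M 1 1 * q.2.1 + M 1 2 * q.2.2 + m.2.1,
         M 2 0 * q.1 + M 2 1 * q.2.1 + M 2 2 * q.2.2 + m.2.2)) →
      eLpNorm f p volume ≤ ENNReal.ofReal (K * (N + 1) * Real.exp (-ε * t) *
            t ^ (-(3:ℝ)/4 * (1 - p⁻¹.toReal) - (k₁ + k₂ + k₃ : ℝ)/4) *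
            B ^ (-(1:ℝ)/4 * (1 - p⁻¹.toReal) - (k₁ : ℝ)/4)) := by
    intro M m hdet f hf
    have hdet0 : M.det ≠ 0 := by
      rw [← abs_pos, hdet]; positivity
    refine (eLpNorm_mono_real hf).trans ?_
    have hsm := eLpNorm_const_smul (μ := volume) (p := p) W (fun q : ℝ × ℝ × ℝ => prof
        (M 0 0 * q.1 + M 0 1 * q.2.1 + M 0 2 * q.2.2 + m.1,
         M 1 0 * q.1 + M 1 1 * q.2.1 + M 1 2 * q.2.2 + m.2.1,
         M 2 0 * q.1 + M 2 1 * q.2.1 + M 2 2 * q.2.2 + m.2.2))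
    refine (le_of_eq hsm).trans ?_
    rw [eLpNorm_prof_affine M hdet0 m hp, Real.enorm_eq_ofReal hW0,
      ← ENNReal.ofReal_mul hW0, abs_inv, hdet, inv_div, ← hN]
    refine ENNReal.ofReal_le_ofReal ?_
    have hX : 0 ≤ (T ^ 3 / σ) ^ p⁻¹.toReal := by positivity
    push_cast at hid
    rw [mul_assoc (K * (N + 1) * Real.exp (-ε * t)), ← hid, hW, ← htT]
    calc _ = K * N * Real.exp (-ε * t) *
          (σ ^ (1 + k₁) / T ^ (3 + (k₁ + k₂ + k₃)) * (T ^ 3 / σ) ^ p⁻¹.toReal) := by ring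
      _ ≤ _ := by gcongr; linarith
  constructor
  · intro x' y' z'
    refine key !![σ / T, -(σ / T * (A * T ^ 4 / 2)), 0; 0, 1 / T, 0; 0, 0, 1 / T]
      (σ / T * (- x' - A * T ^ 4 / 2 * y'), -(1 / T * y'), -(1 / T * z')) ?_ _ fun q => ?_
    · rw [Matrix.det_fin_three, abs_of_nonneg] <;> simp <;> first | positivity | (field_simp)
    · have h := hbound A T σ hT hσ hs q (x', y', z')
      rw [← hW, ← htT] at h
      refine h.trans (le_of_eq ?_)
      congr 2
      simp [pos, Prod.ext_iff]
      refine ⟨?_, ?_, ?_⟩ <;> ring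
  · intro x y z
    refine key !![-(σ / T), -(σ / T * (A * T ^ 4 / 2)), 0; 0, -(1 / T), 0; 0, 0, -(1 / T)]
      (σ / T * (x - A * T ^ 4 / 2 * y), 1 / T * y, 1 / T * z) ?_ _ fun q => ?_
    · rw [Matrix.det_fin_three, abs_of_nonpos] <;> simp <;> first | positivity | (field_simp)
    · have h := hbound A T σ hT hσ hs (x, y, z) q
      rw [← hW, ← htT] at h
      refine h.trans (le_of_eq ?_)
      congr 2
      simp [pos, Prod.ext_iff]
      refine ⟨?_, ?_, ?_⟩ <;> ring
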